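/- Under the stated assumptions, if the initial Hessian approximation is B₀ = aI for some a > 0, Δ₁ := Tr(a∇²f(x_*)⁻¹/(1+D₀)) − d − log det(a∇²f(x_*)⁻¹/(1+D₀)), and Δ₂ := Tr(a∇²f(x_*)⁻¹) − d − log det(a∇²f(x_*)⁻¹), then for every t ≥ Δ₂ + 3D₀(Δ₁ + 3(1+D₀)²/(α(1−β))) the BFGS iterates satisfy (f(x_t) − f(x_*))/(f(x₀) − f(x_*)) ≤ (1 − 2α(1−β)/3)^t. -/

import Mathlib

/-!
Write `H_* = ∇²f(x_*)`. The argument follows the potential `Ψ(W Bₜ)` for a positive definite metric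
`W`; it is nonnegative (`Psi_mul_nonneg`), and one BFGS step changes it in a way that bounds
`log wₜ` from below, where `wₜ = (gᵀs)²/(gᵀWg · sᵀy)` (`Psi_bfgs_step`). The Armijo-Wolfe conditions
give a relative decrease of `f - f_*` of at least `α(1-β) θₜ wₜ` as soon as
`gᵀWg ≥ θₜ (f - f_*)`. Since the logarithms of the `wₜ` telescope up to the excess of
`yᵀWy / sᵀy` over `1`, the geometric mean of the decreases is controlled, and this yields a linear
rate (`bfgs_rate`).

The analytic input is strong self-concordance. It gives `ω(M‖x - x_*‖_*/2) ≤ M²(f(x) - f_*)/4`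
(`omegaFn_dist_le`), so on the sublevel set of `x_t` the Hessian and `H_*` agree up to the factor
`1 + D_t` (`hess_comparable`). Hence `gᵀH_*⁻¹g ≥ 2(f - f_*)/(1 + D_t)` (`grad_dominance`) and
`yᵀH_*⁻¹y ≤ (1 + D_t) sᵀy` (`gradient_difference_bound`).

The rate lemma is used twice. With `W = ((1 + D₀) H_*)⁻¹` there is no excess, and after `Δ₁` steps
`f - f_*` decreases at the linear rate `1 - ρ₁`, `ρ₁ = 2α(1-β)/(3(1+D₀)²)`. As `ω(x)/x²` is
nonincreasing, `D_t` is at most `D₀ (1 - ρ₁)^(t/2)` from then on, which bounds `∑ D_t` by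
`D₀ (Δ₁ + 2/ρ₁)`. With `W = H_*⁻¹` the total loss in the logarithms is at most `Δ₂ + 2 ∑ D_t ≤ t`,
and `log 3 ≥ 1` pays for it: the rate `2α(1-β)/3` results from giving up a factor `3`.
-/

open Matrix Real Finset

noncomputable section

/-- `ω(x) = x − log(1+x)`. -/
def omegaFn (x : ℝ) : ℝ := x - Real.log (1 + x)

/-- `Ψ(A) = Tr(A) − d − log det A`. -/
def Psi (d : ℕ) (A : Matrix (Fin d) (Fin d) ℝ) : ℝ :=
  A.trace - (d : ℝ) - Real.log A.det

/-- Loewner order: `A ⪯ B` iff `B − A` is positive semidefinite. -/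
def loewnerLE {d : ℕ} (A B : Matrix (Fin d) (Fin d) ℝ) : Prop := (B - A).PosSemidef

/-- The BFGS Hessian-approximation update
`B⁺ = B − (B s sᵀ B)/(sᵀ B s) + (y yᵀ)/(sᵀ y)`. -/
def bfgsUpdate {d : ℕ} (B : Matrix (Fin d) (Fin d) ℝ) (s y : Fin d → ℝ) :
    Matrix (Fin d) (Fin d) ℝ :=
  B - (s ⬝ᵥ (B *ᵥ s))⁻¹ • vecMulVec (B *ᵥ s) (Bᵀ *ᵥ s) + (s ⬝ᵥ y)⁻¹ • vecMulVec y y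

/-- `M`-strong self-concordance of a Hessian field:
`∇²f(x) − ∇²f(y) ⪯ M‖x−y‖_z ∇²f(y)` for all `x, y, z`. -/
def StronglySelfConcordant {d : ℕ} (hess : (Fin d → ℝ) → Matrix (Fin d) (Fin d) ℝ)
    (M : ℝ) : Prop :=
  ∀ x y z : Fin d → ℝ,
    loewnerLE (hess x - hess y)
      ((M * Real.sqrt ((x - y) ⬝ᵥ (hess z *ᵥ (x - y)))) • hess y)


/-! ### The BFGS update and the potential `Ψ(W B)` -/

lemma dot_mulVec_comm {d : ℕ} {A : Matrix (Fin d) (Fin d) ℝ} (hA : A.IsHermitian)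
    (u v : Fin d → ℝ) : u ⬝ᵥ (A *ᵥ v) = v ⬝ᵥ (A *ᵥ u) := by
  have hT : Aᵀ = A := by simpa [Matrix.IsHermitian, conjTranspose_eq_transpose_of_trivial] using hA
  rw [dotProduct_mulVec, ← mulVec_transpose, hT, dotProduct_comm]

lemma posDef_dot_pos {d : ℕ} {A : Matrix (Fin d) (Fin d) ℝ} (hA : A.PosDef)
    {v : Fin d → ℝ} (hv : v ≠ 0) : 0 < v ⬝ᵥ (A *ᵥ v) := by
  simpa using hA.dotProduct_mulVec_pos hv

lemma posSemidef_dot_nonneg {d : ℕ} {A : Matrix (Fin d) (Fin d) ℝ} (hA : A.PosSemidef)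
    (v : Fin d → ℝ) : 0 ≤ v ⬝ᵥ (A *ᵥ v) := by
  simpa using hA.dotProduct_mulVec_nonneg v

lemma posDef_inv_mulVec_mulVec {d : ℕ} {A : Matrix (Fin d) (Fin d) ℝ} (hA : A.PosDef)
    (v : Fin d → ℝ) : A⁻¹ *ᵥ (A *ᵥ v) = v := by
  rw [mulVec_mulVec, nonsing_inv_mul _ hA.det_pos.ne'.isUnit, one_mulVec]

lemma posDef_mulVec_inv_mulVec {d : ℕ} {A : Matrix (Fin d) (Fin d) ℝ} (hA : A.PosDef)
    (v : Fin d → ℝ) : A *ᵥ (A⁻¹ *ᵥ v) = v := by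
  rw [mulVec_mulVec, mul_nonsing_inv _ hA.det_pos.ne'.isUnit, one_mulVec]

section Sqrt

open scoped MatrixOrder Matrix.Norms.L2Operator

lemma exists_conjTranspose_mul_self {d : ℕ} {W : Matrix (Fin d) (Fin d) ℝ} (hW : W.PosDef) :
    ∃ Q : Matrix (Fin d) (Fin d) ℝ, W = Qᴴ * Q := by
  obtain ⟨Q, hQ⟩ := CStarAlgebra.nonneg_iff_eq_star_mul_self.mp hW.posSemidef.nonneg
  exact ⟨Q, by rw [hQ, star_eq_conjTranspose]⟩

end Sqrt

/-- `tr (W B) - d - log det (W B)` is the sum of `λ - 1 - log λ` over the eigenvalues `λ > 0` of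
the symmetric matrix `Q B Qᵀ`, where `W = Qᵀ Q`. -/
lemma Psi_mul_nonneg {d : ℕ} {W B : Matrix (Fin d) (Fin d) ℝ} (hW : W.PosDef) (hB : B.PosDef) :
    0 ≤ Psi d (W * B) := by
  obtain ⟨Q, hQ⟩ := exists_conjTranspose_mul_self hW
  have hdet : Q.det ≠ 0 := by
    intro h
    have := hW.det_pos
    rw [hQ, det_mul, h, mul_zero] at this
    exact lt_irrefl _ this
  have hps : (Q * B * Qᴴ).PosSemidef := hB.posSemidef.mul_mul_conjTranspose_same Q
  have hpd : (Q * B * Qᴴ).PosDef := by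
    rw [hps.posDef_iff_det_ne_zero, det_mul, det_mul, det_conjTranspose]
    simpa using ⟨⟨hdet, hB.det_pos.ne'⟩, hdet⟩
  have htr : (W * B).trace = (Q * B * Qᴴ).trace := by
    rw [hQ, Matrix.mul_assoc, trace_mul_comm]
  have hde : (W * B).det = (Q * B * Qᴴ).det := by
    rw [hQ]; simp only [det_mul]; ring
  have hev := hpd.eigenvalues_pos
  have h1 := hpd.1.trace_eq_sum_eigenvalues
  have h2 := hpd.1.det_eq_prod_eigenvalues
  simp only [RCLike.ofReal_real_eq_id, id] at h1 h2
  rw [Psi, htr, hde, h1, h2, Real.log_prod (fun i _ => (hev i).ne')]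
  have h3 : ∑ i, Real.log (hpd.1.eigenvalues i) ≤ ∑ i, (hpd.1.eigenvalues i - 1) :=
    Finset.sum_le_sum fun i _ => Real.log_le_sub_one_of_pos (hev i)
  simp only [Finset.sum_sub_distrib, Finset.sum_const, Finset.card_univ, Fintype.card_fin,
    nsmul_eq_mul, mul_one] at h3
  linarith

lemma cauchy_schwarz_posDef {d : ℕ} {B : Matrix (Fin d) (Fin d) ℝ} (hB : B.PosDef)
    (s v : Fin d → ℝ) (hs : s ≠ 0) :
    (v ⬝ᵥ (B *ᵥ s)) ^ 2 * (s ⬝ᵥ (B *ᵥ s))⁻¹ ≤ v ⬝ᵥ (B *ᵥ v) := by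
  have hp := posDef_dot_pos hB hs
  have h := posSemidef_dot_nonneg hB.posSemidef
    (v - ((v ⬝ᵥ (B *ᵥ s)) * (s ⬝ᵥ (B *ᵥ s))⁻¹) • s)
  simp only [mulVec_sub, mulVec_smul, sub_dotProduct, dotProduct_sub, smul_dotProduct,
    dotProduct_smul, smul_eq_mul, dot_mulVec_comm hB.1 s v] at h
  have e : (v ⬝ᵥ (B *ᵥ s)) * (s ⬝ᵥ (B *ᵥ s))⁻¹ * (s ⬝ᵥ (B *ᵥ s)) = v ⬝ᵥ (B *ᵥ s) := by
    field_simp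
  rw [e, sub_self, mul_zero, sub_zero] at h
  linarith

lemma bfgsUpdate_eq_mul {d : ℕ} {B : Matrix (Fin d) (Fin d) ℝ} (hB : B.PosDef)
    (s y : Fin d → ℝ) :
    bfgsUpdate B s y = B * (1 + (Matrix.of fun i (j : Fin 2) => ![s i, (B⁻¹ *ᵥ y) i] j) *
      (Matrix.of fun (j : Fin 2) i =>
        ![-(s ⬝ᵥ (B *ᵥ s))⁻¹ * (B *ᵥ s) i, (s ⬝ᵥ y)⁻¹ * y i] j)) := by
  have hT : Bᵀ = B := by
    simpa [Matrix.IsHermitian, conjTranspose_eq_transpose_of_trivial] using hB.1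
  have hU : (Matrix.of fun i (j : Fin 2) => ![s i, (B⁻¹ *ᵥ y) i] j) *
      (Matrix.of fun (j : Fin 2) i =>
        ![-(s ⬝ᵥ (B *ᵥ s))⁻¹ * (B *ᵥ s) i, (s ⬝ᵥ y)⁻¹ * y i] j)
      = -(s ⬝ᵥ (B *ᵥ s))⁻¹ • vecMulVec s (B *ᵥ s) + (s ⬝ᵥ y)⁻¹ • vecMulVec (B⁻¹ *ᵥ y) y := by
    ext i j
    simp [Matrix.mul_apply, Fin.sum_univ_two, vecMulVec_apply]
    ring
  rw [hU, Matrix.mul_add, Matrix.mul_one, Matrix.mul_add, Matrix.mul_smul, Matrix.mul_smul,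
    mul_vecMulVec, mul_vecMulVec, posDef_mulVec_inv_mulVec hB, bfgsUpdate, hT, neg_smul]
  abel

/-- `det B₊ = det B · (sᵀy)/(sᵀBs)`: writing `B₊ = B (1 + U V)` with `U` of width two reduces
the determinant to that of the `2 × 2` matrix `1 + V U`. -/
lemma det_bfgsUpdate {d : ℕ} {B : Matrix (Fin d) (Fin d) ℝ} (hB : B.PosDef)
    {s y : Fin d → ℝ} (hs : s ≠ 0) (hsy : s ⬝ᵥ y ≠ 0) :
    (bfgsUpdate B s y).det = B.det * ((s ⬝ᵥ y) / (s ⬝ᵥ (B *ᵥ s))) := by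
  have hp := (posDef_dot_pos hB hs).ne'
  rw [bfgsUpdate_eq_mul hB, det_mul, det_one_add_mul_comm, det_fin_two]
  have h00 : ∑ i, -((s ⬝ᵥ (B *ᵥ s))⁻¹ * (B *ᵥ s) i * s i) = -1 := by
    rw [Finset.sum_neg_distrib]
    simp only [mul_assoc, ← Finset.mul_sum]
    have : ∑ i, (B *ᵥ s) i * s i = s ⬝ᵥ (B *ᵥ s) := by rw [dotProduct_comm]; rfl
    rw [this, inv_mul_cancel₀ hp]
  have h01 : ∑ i, -((s ⬝ᵥ (B *ᵥ s))⁻¹ * (B *ᵥ s) i * (B⁻¹ *ᵥ y) i)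
      = -((s ⬝ᵥ y) / (s ⬝ᵥ (B *ᵥ s))) := by
    rw [Finset.sum_neg_distrib]
    simp only [mul_assoc, ← Finset.mul_sum]
    have : ∑ i, (B *ᵥ s) i * (B⁻¹ *ᵥ y) i = s ⬝ᵥ y := by
      change (B *ᵥ s) ⬝ᵥ (B⁻¹ *ᵥ y) = _
      rw [dotProduct_comm, dot_mulVec_comm hB.1 (B⁻¹ *ᵥ y) s, posDef_mulVec_inv_mulVec hB]
    rw [this]; ring
  have h10 : ∑ i, (s ⬝ᵥ y)⁻¹ * y i * s i = 1 := by
    simp only [mul_assoc, ← Finset.mul_sum]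
    have : ∑ i, y i * s i = s ⬝ᵥ y := by rw [dotProduct_comm]; rfl
    rw [this, inv_mul_cancel₀ hsy]
  simp [Matrix.mul_apply, h00, h01, h10]

lemma posDef_bfgsUpdate {d : ℕ} {B : Matrix (Fin d) (Fin d) ℝ} (hB : B.PosDef)
    {s y : Fin d → ℝ} (hs : s ≠ 0) (hsy : 0 < s ⬝ᵥ y) : (bfgsUpdate B s y).PosDef := by
  have hT : Bᵀ = B := by
    simpa [Matrix.IsHermitian, conjTranspose_eq_transpose_of_trivial] using hB.1
  have hp := posDef_dot_pos hB hs
  have hps : (bfgsUpdate B s y).PosSemidef := by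
    refine PosSemidef.of_dotProduct_mulVec_nonneg ?_ fun v => ?_
    · rw [Matrix.IsHermitian, conjTranspose_eq_transpose_of_trivial, bfgsUpdate]
      simp only [transpose_add, transpose_sub, transpose_smul, transpose_vecMulVec, hT]
    · have hcs := cauchy_schwarz_posDef hB s v hs
      have h2 : 0 ≤ (s ⬝ᵥ y)⁻¹ * (v ⬝ᵥ y) ^ 2 := by positivity
      simp only [bfgsUpdate, hT, star_trivial, add_mulVec, sub_mulVec, smul_mulVec,
        vecMulVec_mulVec, dotProduct_add, dotProduct_sub, dotProduct_smul, smul_eq_mul,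
        op_smul_eq_smul, dotProduct_comm (B *ᵥ s) v, dotProduct_comm y v]
      nlinarith
  rw [hps.posDef_iff_det_ne_zero, det_bfgsUpdate hB hs hsy.ne']
  have := hB.det_pos
  positivity

/-- The potential `Ψ(W B)` after a BFGS step with `B s = -η g`. With
`a = (Bs)ᵀW(Bs) / sᵀBs`, the change of the trace and of the determinant combine through
`log a ≤ a - 1`. -/
lemma Psi_bfgs_step {d : ℕ} {W B : Matrix (Fin d) (Fin d) ℝ} (hW : W.PosDef) (hB : B.PosDef)
    {s y g : Fin d → ℝ} {η : ℝ} (hη : 0 < η) (hg : g ≠ 0) (hs : s = η • (-(B⁻¹ *ᵥ g)))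
    (hsy : 0 < s ⬝ᵥ y) :
    Psi d (W * bfgsUpdate B s y) - Psi d (W * B) + 1 - (y ⬝ᵥ (W *ᵥ y)) / (s ⬝ᵥ y) ≤
      Real.log ((g ⬝ᵥ s) ^ 2 / ((g ⬝ᵥ (W *ᵥ g)) * (s ⬝ᵥ y))) := by
  have hT : Bᵀ = B := by
    simpa [Matrix.IsHermitian, conjTranspose_eq_transpose_of_trivial] using hB.1
  have hs0 : s ≠ 0 := by rintro rfl; simp at hsy
  have hBs : B *ᵥ s = (-η) • g := by
    rw [hs, mulVec_smul, mulVec_neg, posDef_mulVec_inv_mulVec hB, smul_neg, neg_smul]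
  have hp := posDef_dot_pos hB hs0
  have hG := posDef_dot_pos hW hg
  have hsBs : s ⬝ᵥ (B *ᵥ s) = η * -(g ⬝ᵥ s) := by
    rw [hBs, dotProduct_smul, dotProduct_comm, smul_eq_mul]; ring
  have hgs : 0 < -(g ⬝ᵥ s) := by
    rw [hsBs] at hp; exact pos_of_mul_pos_right hp hη.le
  have hdW := hW.det_pos
  have hdB := hB.det_pos
  have htr : (W * bfgsUpdate B s y).trace = (W * B).trace
      - η * (g ⬝ᵥ (W *ᵥ g)) / (-(g ⬝ᵥ s)) + (y ⬝ᵥ (W *ᵥ y)) / (s ⬝ᵥ y) := by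
    rw [bfgsUpdate, hT, Matrix.mul_add, Matrix.mul_sub, trace_add, trace_sub, Matrix.mul_smul,
      Matrix.mul_smul, trace_smul, trace_smul, mul_vecMulVec, mul_vecMulVec, trace_vecMulVec,
      trace_vecMulVec, hsBs, hBs, mulVec_smul, dotProduct_smul, smul_dotProduct,
      dotProduct_comm (W *ᵥ g), dotProduct_comm (W *ᵥ y)]
    simp only [smul_eq_mul]
    field_simp
  have hdet : Real.log (W * bfgsUpdate B s y).det = Real.log (W * B).det
      + Real.log ((s ⬝ᵥ y) / (η * -(g ⬝ᵥ s))) := by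
    rw [det_mul, det_bfgsUpdate hB hs0 hsy.ne', hsBs, ← mul_assoc, ← det_mul, Real.log_mul]
    · rw [det_mul]; positivity
    · positivity
  have ha : 0 < η * (g ⬝ᵥ (W *ᵥ g)) / (-(g ⬝ᵥ s)) := by positivity
  have hlog := Real.log_le_sub_one_of_pos ha
  have hsplit : Real.log ((g ⬝ᵥ s) ^ 2 / ((g ⬝ᵥ (W *ᵥ g)) * (s ⬝ᵥ y))) =
      - Real.log ((s ⬝ᵥ y) / (η * -(g ⬝ᵥ s)))
      - Real.log (η * (g ⬝ᵥ (W *ᵥ g)) / (-(g ⬝ᵥ s))) := by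
    rw [← Real.log_inv, ← Real.log_div (by positivity) (by positivity)]
    congr 1
    have : g ⬝ᵥ s ≠ 0 := by intro h; rw [h] at hgs; simp at hgs
    field_simp
  rw [Psi, Psi, htr, hdet, hsplit]
  linarith

/-! ### Calculus along segments and strong self-concordance -/

lemma monotoneOn_unit_of_hasDerivAt {k k' : ℝ → ℝ}
    (h : ∀ τ ∈ Set.Icc (0 : ℝ) 1, HasDerivAt k (k' τ) τ)
    (h0 : ∀ τ ∈ Set.Icc (0 : ℝ) 1, 0 ≤ k' τ) : MonotoneOn k (Set.Icc 0 1) := by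
  refine monotoneOn_of_deriv_nonneg (convex_Icc 0 1)
    (fun τ hτ => (h τ hτ).continuousAt.continuousWithinAt) (fun τ hτ => ?_) (fun τ hτ => ?_)
  · exact (h τ (interior_subset hτ)).differentiableAt.differentiableWithinAt
  · rw [(h τ (interior_subset hτ)).deriv]; exact h0 τ (interior_subset hτ)

lemma le_of_second_deriv_nonneg {k k₁ k₂ : ℝ → ℝ}
    (h : ∀ τ ∈ Set.Icc (0 : ℝ) 1, HasDerivAt k (k₁ τ) τ)
    (h' : ∀ τ ∈ Set.Icc (0 : ℝ) 1, HasDerivAt k₁ (k₂ τ) τ)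
    (h0 : 0 ≤ k₁ 0) (h2 : ∀ τ ∈ Set.Icc (0 : ℝ) 1, 0 ≤ k₂ τ) : k 0 ≤ k 1 := by
  have hm := monotoneOn_unit_of_hasDerivAt h' h2
  have z : (0 : ℝ) ∈ Set.Icc (0 : ℝ) 1 := by simp
  have o : (1 : ℝ) ∈ Set.Icc (0 : ℝ) 1 := by simp
  exact monotoneOn_unit_of_hasDerivAt h (fun τ hτ => h0.trans (hm z hτ hτ.1)) z o zero_le_one

lemma hasDerivAt_linear (c τ : ℝ) : HasDerivAt (fun τ : ℝ => τ * c) c τ := by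
  simpa using (hasDerivAt_id τ).mul_const c

lemma hasDerivAt_quadratic (c τ : ℝ) : HasDerivAt (fun τ : ℝ => τ ^ 2 * (c / 2)) (τ * c) τ := by
  refine ((hasDerivAt_pow 2 τ).mul_const (c / 2)).congr_deriv ?_
  simp; ring

section Calculus

variable {d : ℕ} {f : (Fin d → ℝ) → ℝ} {grad : (Fin d → ℝ) → (Fin d → ℝ)}
  {hess : (Fin d → ℝ) → Matrix (Fin d) (Fin d) ℝ}

lemma differentiable_grad (hf : ContDiff ℝ 2 f)
    (hgrad : ∀ x v, fderiv ℝ f x v = grad x ⬝ᵥ v) : Differentiable ℝ grad := by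
  have h1 : ContDiff ℝ 1 (fderiv ℝ f) := hf.fderiv_right (by norm_num)
  have h2 : Differentiable ℝ (fderiv ℝ f) := h1.differentiable (by norm_num)
  rw [differentiable_pi]
  intro i
  have h3 : (fun x => grad x i) = fun x => fderiv ℝ f x (Pi.single i 1) := by
    funext x; rw [hgrad]; simp
  rw [h3]
  exact fun x => (h2 x).clm_apply (differentiableAt_const _)

lemma hasDerivAt_line (x u : Fin d → ℝ) (τ : ℝ) : HasDerivAt (fun τ : ℝ => x + τ • u) u τ := by
  simpa using ((hasDerivAt_id τ).smul_const u).const_add x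

lemma hasDerivAt_f_line (hf : ContDiff ℝ 2 f)
    (hgrad : ∀ x v, fderiv ℝ f x v = grad x ⬝ᵥ v) (x u : Fin d → ℝ) (τ : ℝ) :
    HasDerivAt (fun τ : ℝ => f (x + τ • u)) (grad (x + τ • u) ⬝ᵥ u) τ := by
  rw [← hgrad]
  exact ((hf.differentiable (by norm_num)) _).hasFDerivAt.comp_hasDerivAt τ (hasDerivAt_line x u τ)

lemma hasDerivAt_grad_line (hf : ContDiff ℝ 2 f)
    (hgrad : ∀ x v, fderiv ℝ f x v = grad x ⬝ᵥ v)
    (hhess : ∀ x v, fderiv ℝ grad x v = hess x *ᵥ v) (v x u : Fin d → ℝ) (τ : ℝ) :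
    HasDerivAt (fun τ : ℝ => v ⬝ᵥ grad (x + τ • u)) (v ⬝ᵥ (hess (x + τ • u) *ᵥ u)) τ := by
  have h : HasDerivAt (fun τ : ℝ => grad (x + τ • u)) (hess (x + τ • u) *ᵥ u) τ := by
    rw [← hhess]
    exact (differentiable_grad hf hgrad _).hasFDerivAt.comp_hasDerivAt τ (hasDerivAt_line x u τ)
  rw [hasDerivAt_pi] at h
  exact HasDerivAt.fun_sum fun i _ => (h i).const_mul (v i)

/-- Second-order lower model along a segment on which the curvature is at least `c`. -/
lemma quadratic_lower_bound (hf : ContDiff ℝ 2 f)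
    (hgrad : ∀ x v, fderiv ℝ f x v = grad x ⬝ᵥ v)
    (hhess : ∀ x v, fderiv ℝ grad x v = hess x *ᵥ v) (x u : Fin d → ℝ) (c : ℝ)
    (hc : ∀ τ ∈ Set.Icc (0 : ℝ) 1, c ≤ u ⬝ᵥ (hess (x + τ • u) *ᵥ u)) :
    f x + grad x ⬝ᵥ u + c / 2 ≤ f (x + u) := by
  have h := le_of_second_deriv_nonneg
    (k := fun τ : ℝ => f (x + τ • u) - τ * (grad x ⬝ᵥ u) - τ ^ 2 * (c / 2))
    (k₁ := fun τ => u ⬝ᵥ grad (x + τ • u) - grad x ⬝ᵥ u - τ * c)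
    (k₂ := fun τ => u ⬝ᵥ (hess (x + τ • u) *ᵥ u) - c)
    (fun τ _ => by
      have h1 := hasDerivAt_f_line hf hgrad x u τ
      rw [dotProduct_comm] at h1
      exact (h1.sub (hasDerivAt_linear (grad x ⬝ᵥ u) τ)).sub (hasDerivAt_quadratic c τ))
    (fun τ _ => by
      have h1 := hasDerivAt_grad_line hf hgrad hhess u x u τ
      exact (h1.sub_const (grad x ⬝ᵥ u)).sub (hasDerivAt_linear c τ))
    (by simp [dotProduct_comm u])
    (fun τ hτ => by have := hc τ hτ; linarith)
  simp at h
  linarith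

lemma gradient_inequality (hf : ContDiff ℝ 2 f)
    (hgrad : ∀ x v, fderiv ℝ f x v = grad x ⬝ᵥ v)
    (hhess : ∀ x v, fderiv ℝ grad x v = hess x *ᵥ v) (hpd : ∀ x, (hess x).PosDef)
    (x u : Fin d → ℝ) : f x + grad x ⬝ᵥ u ≤ f (x + u) := by
  have := quadratic_lower_bound hf hgrad hhess x u 0
    (fun τ _ => posSemidef_dot_nonneg (hpd _).posSemidef u)
  linarith

lemma segment_le (hf : ContDiff ℝ 2 f)
    (hgrad : ∀ x v, fderiv ℝ f x v = grad x ⬝ᵥ v)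
    (hhess : ∀ x v, fderiv ℝ grad x v = hess x *ᵥ v) (hpd : ∀ x, (hess x).PosDef)
    (x u : Fin d → ℝ) (h : f (x + u) ≤ f x) {τ : ℝ} (hτ : τ ∈ Set.Icc (0 : ℝ) 1) :
    f (x + τ • u) ≤ f x := by
  obtain ⟨h0, h1⟩ := hτ
  have a := gradient_inequality hf hgrad hhess hpd (x + τ • u) (-τ • u)
  have b := gradient_inequality hf hgrad hhess hpd (x + τ • u) ((1 - τ) • u)
  have e1 : x + τ • u + -τ • u = x := by rw [neg_smul]; abel
  have e2 : x + τ • u + (1 - τ) • u = x + u := by rw [sub_smul, one_smul]; abel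
  rw [e1, dotProduct_smul, smul_eq_mul] at a
  rw [e2, dotProduct_smul, smul_eq_mul] at b
  nlinarith

lemma grad_min (hgrad : ∀ x v, fderiv ℝ f x v = grad x ⬝ᵥ v) {xstar : Fin d → ℝ}
    (hmin : ∀ y, f xstar ≤ f y) : grad xstar = 0 := by
  have h : fderiv ℝ f xstar = 0 := IsLocalMin.fderiv_eq_zero (Filter.Eventually.of_forall hmin)
  have := hgrad xstar (grad xstar)
  rw [h] at this
  exact dotProduct_self_eq_zero.mp this.symm

lemma hasDerivAt_omegaFn {τ : ℝ} (hτ : 0 ≤ τ) : HasDerivAt omegaFn (τ / (1 + τ)) τ := by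
  have hp : (1 + τ) ≠ 0 := by positivity
  refine ((hasDerivAt_id τ).sub (((hasDerivAt_id τ).const_add 1).log hp)).congr_deriv ?_
  change 1 - 1 / (1 + τ) = τ / (1 + τ)
  field_simp
  ring

lemma omegaFn_strictMonoOn : StrictMonoOn omegaFn (Set.Ici 0) := by
  refine strictMonoOn_of_deriv_pos (convex_Ici 0)
    (fun τ hτ => (hasDerivAt_omegaFn hτ).continuousAt.continuousWithinAt) fun τ hτ => ?_
  rw [interior_Ici] at hτ
  rw [(hasDerivAt_omegaFn (le_of_lt hτ)).deriv]
  have : 0 < τ := hτ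
  positivity

/-- `ω(x)/x²` is nonincreasing. -/
lemma omegaFn_mul_ge {c x : ℝ} (hc0 : 0 ≤ c) (hc1 : c ≤ 1) (hx : 0 ≤ x) :
    c ^ 2 * omegaFn x ≤ omegaFn (c * x) := by
  have hm : MonotoneOn (fun τ => omegaFn (c * (τ * x)) - c ^ 2 * omegaFn (τ * x))
      (Set.Icc 0 1) := by
    refine monotoneOn_unit_of_hasDerivAt
      (k' := fun τ => (c * (τ * x)) / (1 + c * (τ * x)) * (c * x)
        - c ^ 2 * ((τ * x) / (1 + τ * x) * x)) (fun τ hτ => ?_) (fun τ hτ => ?_)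
    · have hτ0 : 0 ≤ τ * x := mul_nonneg hτ.1 hx
      have h1 := hasDerivAt_linear x τ
      exact ((hasDerivAt_omegaFn (by positivity : 0 ≤ c * (τ * x))).comp τ (h1.const_mul c)).sub
        (((hasDerivAt_omegaFn hτ0).comp τ h1).const_mul (c ^ 2))
    · have hτ0 : 0 ≤ τ * x := mul_nonneg hτ.1 hx
      set y := τ * x
      have h1 : y / (1 + y) ≤ y / (1 + c * y) := by
        gcongr
        nlinarith
      have : c * y / (1 + c * y) * (c * x) - c ^ 2 * (y / (1 + y) * x)
        = c ^ 2 * x * (y / (1 + c * y) - y / (1 + y)) := by ring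
      rw [this]
      have : 0 ≤ y / (1 + c * y) - y / (1 + y) := by linarith
      positivity
  have := hm (by simp : (0 : ℝ) ∈ Set.Icc (0 : ℝ) 1) (by simp : (1 : ℝ) ∈ Set.Icc (0 : ℝ) 1)
    zero_le_one
  simp only [zero_mul, mul_zero, one_mul] at this
  simp only [omegaFn] at this ⊢
  simp at this
  linarith

/-- Strong self-concordance bounds the curvature at `x` by that at `y`, with distances measured
in the norm of `z`. -/
lemma ssc_quad {M : ℝ} (hssc : StronglySelfConcordant hess M) (x y z v : Fin d → ℝ) :
    v ⬝ᵥ (hess x *ᵥ v) ≤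
      (1 + M * Real.sqrt ((x - y) ⬝ᵥ (hess z *ᵥ (x - y)))) * (v ⬝ᵥ (hess y *ᵥ v)) := by
  have h := posSemidef_dot_nonneg (hssc x y z) v
  simp only [sub_mulVec, smul_mulVec, dotProduct_sub, dotProduct_smul, smul_eq_mul] at h
  linarith

/-- `f - f_*` dominates `(4/M²) ω(M r / 2)`, `r` being the distance to the minimizer in the
norm of the Hessian there: along the segment the curvature is at least
`r²/(1 + M r τ) ≥ r²/(1 + M r τ / 2)²`, the second derivative of the right-hand side. -/
lemma omegaFn_dist_le (hf : ContDiff ℝ 2 f)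
    (hgrad : ∀ x v, fderiv ℝ f x v = grad x ⬝ᵥ v)
    (hhess : ∀ x v, fderiv ℝ grad x v = hess x *ᵥ v) (hpd : ∀ x, (hess x).PosDef)
    {M : ℝ} (hM : 0 < M) (hssc : StronglySelfConcordant hess M) {xstar : Fin d → ℝ}
    (hmin : ∀ y, f xstar ≤ f y) (u : Fin d → ℝ) :
    omegaFn (M * Real.sqrt (u ⬝ᵥ (hess xstar *ᵥ u)) / 2)
      ≤ M ^ 2 * (f (xstar + u) - f xstar) / 4 := by
  have hq := posSemidef_dot_nonneg (hpd xstar).posSemidef u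
  set r := Real.sqrt (u ⬝ᵥ (hess xstar *ᵥ u)) with hr
  have hr0 : 0 ≤ r := Real.sqrt_nonneg _
  have hrsq : r ^ 2 = u ⬝ᵥ (hess xstar *ᵥ u) := Real.sq_sqrt hq
  have hg := grad_min hgrad hmin
  have h := le_of_second_deriv_nonneg
    (k := fun τ : ℝ => M ^ 2 / 4 * f (xstar + τ • u) - omegaFn (τ * (M * r / 2)))
    (k₁ := fun τ => M ^ 2 / 4 * (u ⬝ᵥ grad (xstar + τ • u))
      - (τ * (M * r / 2)) / (1 + τ * (M * r / 2)) * (M * r / 2))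
    (k₂ := fun τ => M ^ 2 / 4 * (u ⬝ᵥ (hess (xstar + τ • u) *ᵥ u))
      - (M * r / 2) ^ 2 / (1 + τ * (M * r / 2)) ^ 2)
    (fun τ hτ => by
      have h1 := hasDerivAt_f_line hf hgrad xstar u τ
      rw [dotProduct_comm] at h1
      have h2 := hasDerivAt_linear (M * r / 2) τ
      have hτ0 := hτ.1
      exact (h1.const_mul _).sub (HasDerivAt.comp (h₂ := omegaFn) τ
        (hasDerivAt_omegaFn (by positivity : 0 ≤ τ * (M * r / 2))) h2))
    (fun τ hτ => by
      have h1 := hasDerivAt_grad_line hf hgrad hhess u xstar u τ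
      have h2 := hasDerivAt_linear (M * r / 2) τ
      have hτ0 := hτ.1
      have hp : 1 + τ * (M * r / 2) ≠ 0 := by positivity
      refine ((h1.const_mul (M ^ 2 / 4)).sub
        ((h2.fun_div (h2.const_add 1) hp).mul_const (M * r / 2))).congr_deriv ?_
      congr 1
      field_simp
      ring)
    (by simp [hg])
    (fun τ hτ => by
      have hτ0 := hτ.1
      have h1 := ssc_quad hssc xstar (xstar + τ • u) xstar u
      have e : xstar - (xstar + τ • u) = (-τ) • u := by rw [neg_smul]; abel
      rw [e, mulVec_smul, dotProduct_smul, smul_dotProduct, smul_eq_mul, smul_eq_mul, ← hrsq,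
        show -τ * (-τ * r ^ 2) = (τ * r) ^ 2 by ring, Real.sqrt_sq (by positivity)] at h1
      set K := u ⬝ᵥ (hess (xstar + τ • u) *ᵥ u)
      have hK : 0 ≤ K := posSemidef_dot_nonneg (hpd _).posSemidef u
      have h2 : (M * r / 2) ^ 2 / (1 + τ * (M * r / 2)) ^ 2 ≤ M ^ 2 / 4 * K := by
        rw [div_le_iff₀ (by positivity)]
        have : 1 + M * (τ * r) ≤ (1 + τ * (M * r / 2)) ^ 2 := by
          nlinarith [sq_nonneg (τ * (M * r / 2))]
        calc (M * r / 2) ^ 2 = M ^ 2 / 4 * r ^ 2 := by ring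
          _ ≤ M ^ 2 / 4 * ((1 + M * (τ * r)) * K) := by gcongr
          _ ≤ M ^ 2 / 4 * ((1 + τ * (M * r / 2)) ^ 2 * K) := by gcongr
          _ = _ := by ring
      linarith)
  simp [omegaFn] at h
  simp only [omegaFn]
  linarith

/-- On the sublevel set where `(M²/4)(f - f_*) ≤ ω(D/2)`, the Hessian agrees with the one at the
minimizer up to a factor `1 + D` in either direction. -/
lemma hess_comparable (hf : ContDiff ℝ 2 f)
    (hgrad : ∀ x v, fderiv ℝ f x v = grad x ⬝ᵥ v)
    (hhess : ∀ x v, fderiv ℝ grad x v = hess x *ᵥ v) (hpd : ∀ x, (hess x).PosDef)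
    {M : ℝ} (hM : 0 < M) (hssc : StronglySelfConcordant hess M) {xstar : Fin d → ℝ}
    (hmin : ∀ y, f xstar ≤ f y) {D : ℝ} (hD : 0 ≤ D) {z : Fin d → ℝ}
    (hz : M ^ 2 * (f z - f xstar) / 4 ≤ omegaFn (D / 2)) (v : Fin d → ℝ) :
    v ⬝ᵥ (hess z *ᵥ v) ≤ (1 + D) * (v ⬝ᵥ (hess xstar *ᵥ v)) ∧
      v ⬝ᵥ (hess xstar *ᵥ v) ≤ (1 + D) * (v ⬝ᵥ (hess z *ᵥ v)) := by
  have h1 := omegaFn_dist_le hf hgrad hhess hpd hM hssc hmin (z - xstar)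
  rw [add_sub_cancel] at h1
  have h2 := (omegaFn_strictMonoOn.le_iff_le
    (by rw [Set.mem_Ici]; positivity) (by rw [Set.mem_Ici]; positivity)).mp (h1.trans hz)
  have h3 := ssc_quad hssc z xstar xstar v
  have h4 := ssc_quad hssc xstar z xstar v
  rw [← neg_sub z xstar, mulVec_neg, neg_dotProduct_neg] at h4
  have p1 := posSemidef_dot_nonneg (hpd xstar).posSemidef v
  have p2 := posSemidef_dot_nonneg (hpd z).posSemidef v
  constructor <;> nlinarith

/-- `gᵀ H_*⁻¹ g ≥ 2 (f - f_*)/(1 + D)`: minimize over the displacement the quadratic lower model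
with curvature `H_*/(1 + D)`. -/
lemma grad_dominance (hf : ContDiff ℝ 2 f)
    (hgrad : ∀ x v, fderiv ℝ f x v = grad x ⬝ᵥ v)
    (hhess : ∀ x v, fderiv ℝ grad x v = hess x *ᵥ v) (hpd : ∀ x, (hess x).PosDef)
    {M : ℝ} (hM : 0 < M) (hssc : StronglySelfConcordant hess M) {xstar : Fin d → ℝ}
    (hmin : ∀ y, f xstar ≤ f y) {D : ℝ} (hD : 0 ≤ D) {z : Fin d → ℝ}
    (hz : M ^ 2 * (f z - f xstar) / 4 ≤ omegaFn (D / 2)) :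
    2 / (1 + D) * (f z - f xstar) ≤ grad z ⬝ᵥ ((hess xstar)⁻¹ *ᵥ grad z) := by
  set H := hess xstar with hH
  set u := xstar - z with hu
  have hzu : z + u = xstar := by rw [hu]; abel
  have h1 := quadratic_lower_bound hf hgrad hhess z u ((u ⬝ᵥ (H *ᵥ u)) / (1 + D))
    (fun τ hτ => by
      have hs := segment_le hf hgrad hhess hpd z u (by rw [hzu]; exact hmin z) hτ
      have := (hess_comparable hf hgrad hhess hpd hM hssc hmin hD (z := z + τ • u)
        (le_trans (by gcongr) hz) u).2
      rw [div_le_iff₀ (by positivity)]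
      linarith)
  rw [hzu] at h1
  have hpH : H.PosDef := hpd xstar
  have h2 := posSemidef_dot_nonneg hpH.posSemidef (u + (1 + D) • (H⁻¹ *ᵥ grad z))
  rw [mulVec_add, mulVec_smul, posDef_mulVec_inv_mulVec hpH] at h2
  simp only [add_dotProduct, dotProduct_add, smul_dotProduct, dotProduct_smul, smul_eq_mul] at h2
  rw [dot_mulVec_comm hpH.1 (H⁻¹ *ᵥ grad z) u, posDef_mulVec_inv_mulVec hpH,
    dotProduct_comm u (grad z), dotProduct_comm (H⁻¹ *ᵥ grad z) (grad z)] at h2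
  have h3 : (0 : ℝ) < 1 + D := by positivity
  set q := u ⬝ᵥ (H *ᵥ u)
  set G := grad z ⬝ᵥ (H⁻¹ *ᵥ grad z)
  set w := grad z ⬝ᵥ u
  rw [div_mul_eq_mul_div, div_le_iff₀ h3]
  have h4 : q / (1 + D) + 2 * w + (1 + D) * G ≥ 0 := by
    have : q / (1 + D) + 2 * w + (1 + D) * G
      = (q + (1 + D) * w + (1 + D) * (w + (1 + D) * G)) / (1 + D) := by
      field_simp; ring
    rw [this]; positivity
  have h5 : q / (1 + D) / 2 = q / (1 + D) * (1 / 2) := by ring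
  linarith

/-- `yᵀ H_*⁻¹ y ≤ (1 + D) sᵀy` for the gradient difference `y` along a step `s` that does not
increase `f`. With `v = H_*⁻¹ y`, integrate
`vᵀHs ≤ vᵀHv/(2(1+D)) + (1+D) sᵀHs/2` and `vᵀHv ≤ (1+D) vᵀH_*v` along the segment. -/
lemma gradient_difference_bound (hf : ContDiff ℝ 2 f)
    (hgrad : ∀ x v, fderiv ℝ f x v = grad x ⬝ᵥ v)
    (hhess : ∀ x v, fderiv ℝ grad x v = hess x *ᵥ v) (hpd : ∀ x, (hess x).PosDef)
    {M : ℝ} (hM : 0 < M) (hssc : StronglySelfConcordant hess M) {xstar : Fin d → ℝ}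
    (hmin : ∀ y, f xstar ≤ f y) {D : ℝ} (hD : 0 ≤ D) {z s : Fin d → ℝ}
    (hz : M ^ 2 * (f z - f xstar) / 4 ≤ omegaFn (D / 2)) (hs : f (z + s) ≤ f z)
    {y : Fin d → ℝ} (hy : y = grad (z + s) - grad z) :
    y ⬝ᵥ ((hess xstar)⁻¹ *ᵥ y) ≤ (1 + D) * (s ⬝ᵥ y) := by
  set H := hess xstar with hH
  have hpH : H.PosDef := hpd xstar
  set v := H⁻¹ *ᵥ y with hv
  have hvv : v ⬝ᵥ (H *ᵥ v) = y ⬝ᵥ v := by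
    rw [hv, posDef_mulVec_inv_mulVec hpH, dotProduct_comm]
  have h3 : (0 : ℝ) < 1 + D := by positivity
  have hm := monotoneOn_unit_of_hasDerivAt
    (k := fun τ : ℝ => (1 + D) / 2 * (s ⬝ᵥ grad (z + τ • s)) + τ * ((y ⬝ᵥ v) / 2)
      - v ⬝ᵥ grad (z + τ • s))
    (k' := fun τ => (1 + D) / 2 * (s ⬝ᵥ (hess (z + τ • s) *ᵥ s)) + (y ⬝ᵥ v) / 2
      - v ⬝ᵥ (hess (z + τ • s) *ᵥ s))
    (fun τ _ => by
      have h1 := hasDerivAt_grad_line hf hgrad hhess s z s τ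
      have h2 := hasDerivAt_grad_line hf hgrad hhess v z s τ
      exact ((h1.const_mul _).add (hasDerivAt_linear ((y ⬝ᵥ v) / 2) τ)).sub h2)
    (fun τ hτ => by
      have hseg := segment_le hf hgrad hhess hpd z s hs hτ
      have hc := (hess_comparable hf hgrad hhess hpd hM hssc hmin hD (z := z + τ • s)
        (le_trans (by gcongr) hz) v).1
      rw [hvv] at hc
      have h2 := posSemidef_dot_nonneg (hpd (z + τ • s)).posSemidef (v - (1 + D) • s)
      simp only [mulVec_sub, mulVec_smul, sub_dotProduct, dotProduct_sub, smul_dotProduct,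
        dotProduct_smul, smul_eq_mul, dot_mulVec_comm (hpd (z + τ • s)).1 s v] at h2
      set A := v ⬝ᵥ (hess (z + τ • s) *ᵥ v)
      set B := v ⬝ᵥ (hess (z + τ • s) *ᵥ s)
      set E := s ⬝ᵥ (hess (z + τ • s) *ᵥ s)
      have h5 : 0 ≤ (1 + D) * ((1 + D) / 2 * E + (y ⬝ᵥ v) / 2 - B) := by nlinarith
      exact nonneg_of_mul_nonneg_right h5 h3)
  have := hm (by simp : (0 : ℝ) ∈ Set.Icc (0 : ℝ) 1) (by simp : (1 : ℝ) ∈ Set.Icc (0 : ℝ) 1)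
    zero_le_one
  simp only [zero_smul, one_smul, add_zero, zero_mul, one_mul] at this
  have e1 : s ⬝ᵥ y = s ⬝ᵥ grad (z + s) - s ⬝ᵥ grad z := by rw [hy, dotProduct_sub]
  have e2 : y ⬝ᵥ v = v ⬝ᵥ grad (z + s) - v ⬝ᵥ grad z := by
    rw [dotProduct_comm, ← dotProduct_sub, ← hy]
  rw [e1]
  linarith

end Calculus

/-! ### Scalar estimates -/

/-- A step with relative decrease at least `r` compared with a target rate `ρ`:
`1 - r ≤ (1 - ρ) exp (-(ρ/(1-ρ)) log (r/ρ))`, from `1 + u ≤ exp u` and `1 + log v ≤ v`. -/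
lemma one_sub_le_rate {r ρ L : ℝ} (hρ0 : 0 < ρ) (hρ1 : ρ < 1) (hr : 0 < r)
    (hL : L ≤ Real.log (r / ρ)) :
    1 - r ≤ (1 - ρ) * Real.exp (ρ / (1 - ρ) * -L) := by
  have h1 : 0 < 1 - ρ := by linarith
  have h2 : Real.log (r / ρ) ≤ r / ρ - 1 := Real.log_le_sub_one_of_pos (by positivity)
  have h3 : ρ / (1 - ρ) * -(r / ρ - 1) ≤ ρ / (1 - ρ) * -L := by
    gcongr; linarith
  have h4 := Real.add_one_le_exp (ρ / (1 - ρ) * -L)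
  calc 1 - r = (1 - ρ) * (ρ / (1 - ρ) * -(r / ρ - 1) + 1) := by field_simp; ring
    _ ≤ (1 - ρ) * Real.exp (ρ / (1 - ρ) * -L) := by gcongr; linarith

/-- The first `⌈Δ⌉` terms are bounded by `D₀` and the later ones by a geometric sequence; dropping
the index `0` from one of the two bounds absorbs the rounding of `Δ`. -/
lemma sum_le_of_eventually_geometric {D : ℕ → ℝ} {D₀ Δ q : ℝ} (hΔ : 0 ≤ Δ) (hq0 : 0 ≤ q)
    (hq1 : q < 1) (hD₀ : 0 ≤ D₀) (h1 : ∀ i, D i ≤ D₀)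
    (h2 : ∀ i : ℕ, Δ ≤ i → D i ≤ q ^ i * D₀) (T : ℕ) :
    ∑ i ∈ Finset.range T, D i ≤ D₀ * (Δ + 1 / (1 - q)) := by
  have hq : 0 < 1 - q := by linarith
  have hgeo : ∑ i ∈ Finset.range T, q ^ i ≤ 1 / (1 - q) := by
    rw [le_div_iff₀ hq, geom_sum_mul_neg]
    have : 0 ≤ q ^ T := by positivity
    linarith
  rcases hΔ.eq_or_lt with h0 | hpos
  · subst h0
    calc ∑ i ∈ Finset.range T, D i ≤ ∑ i ∈ Finset.range T, q ^ i * D₀ :=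
          Finset.sum_le_sum fun i _ => h2 i (by positivity)
      _ = D₀ * ∑ i ∈ Finset.range T, q ^ i := by rw [← Finset.sum_mul, mul_comm]
      _ ≤ _ := by gcongr; linarith
  · set k := ⌈Δ⌉₊
    have hk1 : 0 < k := Nat.ceil_pos.mpr hpos
    have hkΔ : (k : ℝ) < Δ + 1 := Nat.ceil_lt_add_one hΔ
    rcases Nat.eq_zero_or_pos T with hT | hT
    · subst hT; simp; positivity
    have hterm : ∀ i ∈ Finset.range T,
        D i ≤ D₀ * ((if i < k then (1 : ℝ) else 0) + q ^ i - if i = 0 then 1 else 0) := by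
      intro i _
      by_cases hi0 : i = 0
      · subst hi0; simpa [hk1] using h1 0
      by_cases hik : i < k
      · have : 0 ≤ D₀ * q ^ i := by positivity
        simp only [hik, hi0, if_true, if_false, sub_zero, mul_add, mul_one]
        linarith [h1 i]
      · simp only [hik, hi0, if_false, sub_zero, zero_add]
        rw [mul_comm]
        exact h2 i (Nat.ceil_le.mp (not_lt.mp hik))
    have hcount : ∑ i ∈ Finset.range T, (if i < k then (1 : ℝ) else 0) ≤ k := by
      rw [Finset.sum_boole]
      have : (Finset.filter (fun i => i < k) (Finset.range T)).card ≤ (Finset.range k).card :=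
        Finset.card_le_card fun i hi => by simp at hi ⊢; exact hi.2
      rw [Finset.card_range] at this
      exact_mod_cast this
    have hone : ∑ i ∈ Finset.range T, (if i = 0 then (1 : ℝ) else 0) = 1 := by
      simp [hT]
    calc ∑ i ∈ Finset.range T, D i
        ≤ ∑ i ∈ Finset.range T,
          D₀ * ((if i < k then (1 : ℝ) else 0) + q ^ i - if i = 0 then 1 else 0) :=
          Finset.sum_le_sum hterm
      _ ≤ D₀ * (Δ + 1 / (1 - q)) := by
          rw [← Finset.mul_sum, Finset.sum_sub_distrib, Finset.sum_add_distrib, hone]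
          gcongr
          linarith

/-! ### Linear rates from the potential -/

section Iteration

variable {d : ℕ} {f : (Fin d → ℝ) → ℝ} {grad : (Fin d → ℝ) → (Fin d → ℝ)}
  {x : ℕ → Fin d → ℝ} {B : ℕ → Matrix (Fin d) (Fin d) ℝ} {η : ℕ → ℝ} {α β : ℝ}

lemma descent_direction {A : Matrix (Fin d) (Fin d) ℝ} (hA : A.PosDef) {g : Fin d → ℝ}
    (hg : g ≠ 0) : g ⬝ᵥ (-(A⁻¹ *ᵥ g)) < 0 := by
  rw [dotProduct_neg]
  linarith [posDef_dot_pos hA.inv hg]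

/-- The curvature condition: `sᵀy ≥ (1 - β)(-gᵀs) > 0`, and the Armijo decrease in terms
of `gᵀs`. -/
lemma wolfe_step (hβ : β < 1) (hη : ∀ t, 0 < η t)
    (hxupd : ∀ t, x (t+1) = x t + η t • (-((B t)⁻¹ *ᵥ grad (x t))))
    (hAW1 : ∀ t, f (x (t+1)) ≤
      f (x t) + α * η t * (grad (x t) ⬝ᵥ (-((B t)⁻¹ *ᵥ grad (x t)))))
    (hAW2 : ∀ t, grad (x (t+1)) ⬝ᵥ (-((B t)⁻¹ *ᵥ grad (x t))) ≥
      β * (grad (x t) ⬝ᵥ (-((B t)⁻¹ *ᵥ grad (x t)))))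
    {t : ℕ} (hB : (B t).PosDef) (hg : grad (x t) ≠ 0) :
    grad (x t) ⬝ᵥ (x (t+1) - x t) < 0 ∧
    f (x (t+1)) ≤ f (x t) + α * (grad (x t) ⬝ᵥ (x (t+1) - x t)) ∧
    (1 - β) * -(grad (x t) ⬝ᵥ (x (t+1) - x t)) ≤
      (x (t+1) - x t) ⬝ᵥ (grad (x (t+1)) - grad (x t)) ∧
    0 < (x (t+1) - x t) ⬝ᵥ (grad (x (t+1)) - grad (x t)) := by
  have hs : x (t+1) - x t = η t • (-((B t)⁻¹ *ᵥ grad (x t))) := by rw [hxupd t]; abel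
  have hp := descent_direction hB hg
  have h1 := hAW1 t
  have h2 := hAW2 t
  have h3 := hη t
  rw [hs, dotProduct_comm (η t • _), sub_dotProduct]
  simp only [dotProduct_smul, smul_eq_mul]
  set p := grad (x t) ⬝ᵥ (-((B t)⁻¹ *ᵥ grad (x t)))
  set p' := grad (x (t+1)) ⬝ᵥ (-((B t)⁻¹ *ᵥ grad (x t)))
  have h4 : 0 < η t * -p := mul_pos h3 (by linarith)
  have h5 : (1 - β) * -(η t * p) ≤ η t * p' - η t * p := by nlinarith
  have h6 : 0 < (1 - β) * -(η t * p) := mul_pos (by linarith) (by linarith)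
  exact ⟨by linarith, by linarith, h5, by linarith⟩

lemma bfgs_posDef (hβ : β < 1) (hB0 : (B 0).PosDef) (hη : ∀ t, 0 < η t)
    (hxupd : ∀ t, x (t+1) = x t + η t • (-((B t)⁻¹ *ᵥ grad (x t))))
    (hBupd : ∀ t, B (t+1) = bfgsUpdate (B t) (x (t+1) - x t) (grad (x (t+1)) - grad (x t)))
    (hAW1 : ∀ t, f (x (t+1)) ≤
      f (x t) + α * η t * (grad (x t) ⬝ᵥ (-((B t)⁻¹ *ᵥ grad (x t)))))
    (hAW2 : ∀ t, grad (x (t+1)) ⬝ᵥ (-((B t)⁻¹ *ᵥ grad (x t))) ≥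
      β * (grad (x t) ⬝ᵥ (-((B t)⁻¹ *ᵥ grad (x t))))) (t : ℕ) : (B t).PosDef := by
  induction t with
  | zero => exact hB0
  | succ t ih =>
    by_cases hg : grad (x t) = 0
    -- The step vanishes and both correction terms have a zero numerator and denominator.
    · have hx : x (t+1) = x t := by rw [hxupd t, hg]; simp
      rw [hBupd t, hx, sub_self, sub_self]
      simpa [bfgsUpdate] using ih
    · obtain ⟨-, -, -, hsy⟩ := wolfe_step hβ hη hxupd hAW1 hAW2 ih hg
      rw [hBupd t]
      refine posDef_bfgsUpdate ih ?_ hsy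
      intro h
      rw [h, zero_dotProduct] at hsy
      exact lt_irrefl _ hsy

/-- The linear-rate estimate in a general metric `W`. If `yᵀWy ≤ (1 + δ) sᵀy` and
`gᵀWg ≥ θ (f - f_*)` along the iterates, the relative decrease of step `i` is at least
`α(1-β) θᵢ wᵢ` with `wᵢ = (gᵀs)²/(gᵀWg · sᵀy)`, and the logarithms of the `wᵢ` telescope against
the potential `Ψ(W B)`. The rate `1 - ρ` holds at every `T` for which `∑ log (α(1-β)θᵢ/ρ)` has
absorbed `∑ δᵢ` and the initial potential. -/
lemma bfgs_rate (hα0 : 0 < α) (hβ : β < 1) (hB0 : (B 0).PosDef) (hη : ∀ t, 0 < η t)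
    (hxupd : ∀ t, x (t+1) = x t + η t • (-((B t)⁻¹ *ᵥ grad (x t))))
    (hBupd : ∀ t, B (t+1) = bfgsUpdate (B t) (x (t+1) - x t) (grad (x (t+1)) - grad (x t)))
    (hAW1 : ∀ t, f (x (t+1)) ≤
      f (x t) + α * η t * (grad (x t) ⬝ᵥ (-((B t)⁻¹ *ᵥ grad (x t)))))
    (hAW2 : ∀ t, grad (x (t+1)) ⬝ᵥ (-((B t)⁻¹ *ᵥ grad (x t))) ≥
      β * (grad (x t) ⬝ᵥ (-((B t)⁻¹ *ᵥ grad (x t)))))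
    {fmin : ℝ} (hmin : ∀ t, fmin ≤ f (x t))
    (hgrad0 : ∀ t, grad (x t) = 0 → f (x t) = fmin)
    {W : Matrix (Fin d) (Fin d) ℝ} (hW : W.PosDef) {δ θ : ℕ → ℝ} {ρ : ℝ}
    (hρ0 : 0 < ρ) (hρ1 : ρ < 1)
    (hy : ∀ t, (grad (x (t+1)) - grad (x t)) ⬝ᵥ (W *ᵥ (grad (x (t+1)) - grad (x t))) ≤
      (1 + δ t) * ((x (t+1) - x t) ⬝ᵥ (grad (x (t+1)) - grad (x t))))
    (hθ0 : ∀ t, 0 < θ t)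
    (hθ : ∀ t, θ t * (f (x t) - fmin) ≤ grad (x t) ⬝ᵥ (W *ᵥ grad (x t)))
    (T : ℕ) (hT : ∑ i ∈ Finset.range T, (δ i - Real.log (α * (1 - β) * θ i / ρ))
      + Psi d (W * B 0) ≤ 0) :
    f (x T) - fmin ≤ (f (x 0) - fmin) * (1 - ρ) ^ T := by
  have hpd := bfgs_posDef hβ hB0 hη hxupd hBupd hAW1 hAW2
  have h1ρ : 0 < 1 - ρ := by linarith
  have hκ : 0 < α * (1 - β) := mul_pos hα0 (by linarith)
  have key : ∀ T, f (x T) - fmin ≤ (f (x 0) - fmin) * (1 - ρ) ^ T *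
      Real.exp (ρ / (1 - ρ) * (∑ i ∈ Finset.range T,
        (δ i - Real.log (α * (1 - β) * θ i / ρ)) + Psi d (W * B 0) - Psi d (W * B T))) := by
    intro T
    induction T with
    | zero => simp
    | succ T ih =>
      by_cases hg : grad (x T) = 0
      · have hx : x (T+1) = x T := by rw [hxupd T, hg]; simp
        rw [hx, hgrad0 T hg, sub_self]
        have := hmin 0
        have : 0 ≤ f (x 0) - fmin := by linarith
        positivity
      obtain ⟨hgs, hdec, hcurv, hsy⟩ := wolfe_step hβ hη hxupd hAW1 hAW2 (hpd T) hg
      have hs : x (T+1) - x T = η T • (-((B T)⁻¹ *ᵥ grad (x T))) := by rw [hxupd T]; abel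
      have hpot := Psi_bfgs_step hW (hpd T) (hη T) hg hs hsy
      rw [← hBupd T] at hpot
      have hG := posDef_dot_pos hW hg
      have hyT := hy T
      have hθT := hθ T
      have hθT0 := hθ0 T
      have hC : 0 ≤ f (x T) - fmin := by linarith [hmin T]
      set s := x (T+1) - x T
      set y := grad (x (T+1)) - grad (x T)
      set g := grad (x T)
      set w := (g ⬝ᵥ s) ^ 2 / ((g ⬝ᵥ (W *ᵥ g)) * (s ⬝ᵥ y)) with hw
      have hw0 : 0 < w := by
        have : g ⬝ᵥ s ≠ 0 := hgs.ne
        positivity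
      have hratio : (y ⬝ᵥ (W *ᵥ y)) / (s ⬝ᵥ y) ≤ 1 + δ T := by
        rwa [div_le_iff₀ hsy]
      have hlogw : Psi d (W * B (T+1)) - Psi d (W * B T) - δ T ≤ Real.log w := by linarith
      have hwG : w * (g ⬝ᵥ (W *ᵥ g)) * (s ⬝ᵥ y) = (g ⬝ᵥ s) ^ 2 := by
        rw [hw]; field_simp
      -- `(gᵀs)² = w · gᵀWg · sᵀy` and `sᵀy ≥ (1-β)(-gᵀs)` turn the decrease `-gᵀs` into `w · gᵀWg`.
      have hgsw : (1 - β) * (w * (g ⬝ᵥ (W *ᵥ g))) ≤ -(g ⬝ᵥ s) := by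
        have h1 : (w * (g ⬝ᵥ (W *ᵥ g))) * ((1 - β) * -(g ⬝ᵥ s)) ≤
            (w * (g ⬝ᵥ (W *ᵥ g))) * (s ⬝ᵥ y) := by gcongr
        have h2 : ((1 - β) * (w * (g ⬝ᵥ (W *ᵥ g)))) * -(g ⬝ᵥ s) ≤ -(g ⬝ᵥ s) * -(g ⬝ᵥ s) := by
          nlinarith
        exact le_of_mul_le_mul_right h2 (by linarith)
      set r := α * (1 - β) * θ T * w with hr
      have hr0 : 0 < r := by positivity
      have hstep : f (x (T+1)) - fmin ≤ (1 - r) * (f (x T) - fmin) := by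
        have h1 : α * ((1 - β) * (w * (θ T * (f (x T) - fmin)))) ≤ α * -(g ⬝ᵥ s) := by
          refine mul_le_mul_of_nonneg_left (le_trans ?_ hgsw) hα0.le
          have : 0 ≤ 1 - β := by linarith
          gcongr
        rw [hr]
        linarith
      have hlogr : Real.log (r / ρ) = Real.log (α * (1 - β) * θ T / ρ) + Real.log w := by
        rw [← Real.log_mul (by positivity) (by positivity), hr]
        congr 1; ring
      have hrate := one_sub_le_rate hρ0 hρ1 hr0
        (L := Real.log (α * (1 - β) * θ T / ρ) + (Psi d (W * B (T+1)) - Psi d (W * B T) - δ T))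
        (by rw [hlogr]; linarith)
      calc f (x (T+1)) - fmin ≤ (1 - r) * (f (x T) - fmin) := hstep
        _ ≤ ((1 - ρ) * Real.exp (ρ / (1 - ρ) * -(Real.log (α * (1 - β) * θ T / ρ) +
              (Psi d (W * B (T+1)) - Psi d (W * B T) - δ T)))) * (f (x T) - fmin) := by gcongr
        _ ≤ ((1 - ρ) * Real.exp (ρ / (1 - ρ) * -(Real.log (α * (1 - β) * θ T / ρ) +
              (Psi d (W * B (T+1)) - Psi d (W * B T) - δ T)))) *
            ((f (x 0) - fmin) * (1 - ρ) ^ T *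
              Real.exp (ρ / (1 - ρ) * (∑ i ∈ Finset.range T,
              (δ i - Real.log (α * (1 - β) * θ i / ρ)) + Psi d (W * B 0) - Psi d (W * B T))) ) := by
            gcongr
        _ = _ := by
            rw [show ∀ a b c e g : ℝ, (a * b) * (c * e * g) = c * (e * a) * (b * g) by
              intros; ring, ← pow_succ, ← Real.exp_add, Finset.sum_range_succ]
            congr 2
            ring
  refine (key T).trans ?_
  have hΨ := Psi_mul_nonneg hW (hpd T)
  have h0 : 0 ≤ f (x 0) - fmin := by linarith [hmin 0]
  refine mul_le_of_le_one_right (by positivity) (Real.exp_le_one_iff.mpr ?_)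
  exact mul_nonpos_of_nonneg_of_nonpos (by positivity) (by linarith)

end Iteration

/-! ### The improved rate -/

/-- Improved global linear convergence of BFGS with `B₀ = aI` (Corollary 2). -/
theorem bfgs_improved_linear_rate_identity_init {d : ℕ}
    (f : (Fin d → ℝ) → ℝ)
    (grad : (Fin d → ℝ) → (Fin d → ℝ))
    (hess : (Fin d → ℝ) → Matrix (Fin d) (Fin d) ℝ)
    (hf : ContDiff ℝ 2 f)
    (hgrad : ∀ x v, fderiv ℝ f x v = grad x ⬝ᵥ v)
    (hhess : ∀ x v, fderiv ℝ grad x v = hess x *ᵥ v)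
    (hpd : ∀ x, (hess x).PosDef)
    (M : ℝ) (hM : 0 < M)
    (hssc : StronglySelfConcordant hess M)
    (xstar : Fin d → ℝ) (hmin : ∀ y, f xstar ≤ f y)
    (α β : ℝ) (hα0 : 0 < α) (hα : α < 1/2) (hαβ : α < β) (hβ : β < 1)
    (x : ℕ → Fin d → ℝ) (B : ℕ → Matrix (Fin d) (Fin d) ℝ) (η : ℕ → ℝ)
    (hB0symm : (B 0).IsSymm) (hB0pd : (B 0).PosDef)
    (hx0 : f xstar < f (x 0))
    (hη : ∀ t, 0 < η t)
    (hxupd : ∀ t, x (t+1) = x t + η t • (-((B t)⁻¹ *ᵥ grad (x t))))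
    (hBupd : ∀ t, B (t+1) = bfgsUpdate (B t) (x (t+1) - x t) (grad (x (t+1)) - grad (x t)))
    (hAW1 : ∀ t, f (x (t+1)) ≤
      f (x t) + α * η t * (grad (x t) ⬝ᵥ (-((B t)⁻¹ *ᵥ grad (x t)))))
    (hAW2 : ∀ t, grad (x (t+1)) ⬝ᵥ (-((B t)⁻¹ *ᵥ grad (x t))) ≥
      β * (grad (x t) ⬝ᵥ (-((B t)⁻¹ *ᵥ grad (x t)))))
    (C : ℕ → ℝ) (hC : ∀ t, C t = f (x t) - f xstar)
    (D : ℕ → ℝ) (hD : ∀ t, 0 ≤ D t ∧ omegaFn (D t / 2) = M ^ 2 * C t / 4)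
    (a : ℝ) (ha : 0 < a)
    (hB0eq : B 0 = a • (1 : Matrix (Fin d) (Fin d) ℝ))
    (Δ₁ Δ₂ : ℝ)
    (hΔ₁ : Δ₁ = Psi d ((1 + D 0)⁻¹ • (a • (hess xstar)⁻¹)))
    (hΔ₂ : Δ₂ = Psi d (a • (hess xstar)⁻¹))
    (t : ℕ)
    (ht : Δ₂ + 3 * D 0 * (Δ₁ + 3 * (1 + D 0) ^ 2 / (α * (1 - β))) ≤ (t : ℝ)) :
    (f (x t) - f xstar) / (f (x 0) - f xstar) ≤
      (1 - 2 * α * (1 - β) / 3) ^ t := by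
  have hκ : 0 < α * (1 - β) := mul_pos hα0 (by linarith)
  have hκ1 : α * (1 - β) < 1 / 2 := by nlinarith
  have hPD := bfgs_posDef hβ hB0pd hη hxupd hBupd hAW1 hAW2
  have hgrad0 : ∀ i, grad (x i) = 0 → f (x i) = f xstar := by
    intro i hi
    have h := gradient_inequality hf hgrad hhess hpd (x i) (xstar - x i)
    rw [hi, zero_dotProduct, add_zero, add_sub_cancel] at h
    exact le_antisymm h (hmin _)
  have hdesc : ∀ i, f (x (i+1)) ≤ f (x i) := by
    intro i
    by_cases hg : grad (x i) = 0
    · have hx : x (i+1) = x i := by rw [hxupd i, hg]; simp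
      rw [hx]
    · obtain ⟨h1, h2, -, -⟩ := wolfe_step hβ hη hxupd hAW1 hAW2 (hPD i) hg
      nlinarith
  have hanti : ∀ i, f (x i) ≤ f (x 0) := fun i =>
    antitone_nat_of_succ_le (f := fun i => f (x i)) hdesc (Nat.zero_le i)
  have hseg : ∀ i, x i + (x (i+1) - x i) = x (i+1) := fun i => add_sub_cancel _ _
  have hD0 : 0 ≤ D 0 := (hD 0).1
  have hβ1 : 1 - β ≠ 0 := (sub_pos.mpr hβ).ne'
  have hHpd : ((hess xstar)⁻¹).PosDef := (hpd xstar).inv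
  have hlev : ∀ i, M ^ 2 * (f (x i) - f xstar) / 4 ≤ omegaFn (D i / 2) := by
    intro i; rw [(hD i).2, hC]
  have hlev0 : ∀ i, M ^ 2 * (f (x i) - f xstar) / 4 ≤ omegaFn (D 0 / 2) := by
    intro i
    refine le_trans ?_ (hlev 0)
    gcongr
    exact hanti i
  have hlog3 : 1 ≤ Real.log 3 := by
    rw [Real.le_log_iff_exp_le (by norm_num)]
    linarith [Real.exp_one_lt_d9]
  -- The metric `(1 + D₀) H_*` dominates every averaged Hessian, so it gives a rate without
  -- correction terms, valid after `Δ₁` iterations.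
  set ρ₁ := 2 * (α * (1 - β)) / (3 * (1 + D 0) ^ 2) with hρ₁
  have hρ₁0 : 0 < ρ₁ := by positivity
  have hρ₁1 : ρ₁ < 1 := by
    rw [hρ₁, div_lt_one (by positivity)]
    nlinarith
  have hW₁ : ((1 + D 0)⁻¹ • (hess xstar)⁻¹).PosDef := hHpd.smul (by positivity)
  have hΔ₁' : Psi d (((1 + D 0)⁻¹ • (hess xstar)⁻¹) * B 0) = Δ₁ := by
    rw [hΔ₁, hB0eq, Matrix.mul_smul, Matrix.mul_one, smul_comm]
  have hΔ₁0 : 0 ≤ Δ₁ := hΔ₁' ▸ Psi_mul_nonneg hW₁ hB0pd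
  have phase1 : ∀ T : ℕ, Δ₁ ≤ T →
      f (x T) - f xstar ≤ (f (x 0) - f xstar) * (1 - ρ₁) ^ T := by
    intro T hT
    refine bfgs_rate hα0 hβ hB0pd hη hxupd hBupd hAW1 hAW2 (fun i => hmin _) hgrad0 hW₁
      (δ := fun _ => 0) (θ := fun _ => 2 / (1 + D 0) ^ 2) hρ₁0 hρ₁1 ?_ ?_ ?_ T ?_
    · intro i
      have h := gradient_difference_bound hf hgrad hhess hpd hM hssc hmin hD0 (hlev0 i)
        (s := x (i+1) - x i) (by rw [hseg]; exact hdesc i) (y := grad (x (i+1)) - grad (x i))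
        (by rw [hseg])
      rw [smul_mulVec, dotProduct_smul, smul_eq_mul, inv_mul_le_iff₀ (by positivity)]
      linarith
    · intro i; positivity
    · intro i
      have h := grad_dominance hf hgrad hhess hpd hM hssc hmin hD0 (hlev0 i)
      rw [smul_mulVec, dotProduct_smul, smul_eq_mul, le_inv_mul_iff₀ (by positivity)]
      refine le_trans (le_of_eq ?_) h
      field_simp
    · have e : α * (1 - β) * (2 / (1 + D 0) ^ 2) / ρ₁ = 3 := by
        rw [hρ₁]; field_simp
      rw [hΔ₁', e]
      simp only [Finset.sum_const, Finset.card_range, nsmul_eq_mul]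
      nlinarith [(Nat.cast_nonneg T : (0 : ℝ) ≤ T)]
  -- `D` scales at most like the square root of the suboptimality.
  have hDscale : ∀ (i : ℕ) (c : ℝ), 0 ≤ c → c ≤ 1 →
      f (x i) - f xstar ≤ (f (x 0) - f xstar) * c ^ 2 → D i ≤ c * D 0 := by
    intro i c hc0 hc1 h
    have h1 := omegaFn_mul_ge hc0 hc1 (by positivity : 0 ≤ D 0 / 2)
    have h2 : omegaFn (D i / 2) ≤ omegaFn (c * (D 0 / 2)) := by
      refine le_trans ?_ h1
      rw [(hD i).2, (hD 0).2, hC, hC]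
      nlinarith [mul_le_mul_of_nonneg_left h (sq_nonneg M)]
    have hDi := (hD i).1
    have h3 := (omegaFn_strictMonoOn.le_iff_le
      (by rw [Set.mem_Ici]; positivity) (by rw [Set.mem_Ici]; positivity)).mp h2
    linarith
  set q := Real.sqrt (1 - ρ₁) with hq
  have hq0 : 0 ≤ q := Real.sqrt_nonneg _
  have hqsq : q ^ 2 = 1 - ρ₁ := Real.sq_sqrt (by linarith)
  have hq1 : q < 1 := by nlinarith
  have hsumD : ∑ i ∈ Finset.range t, D i ≤ D 0 * (Δ₁ + 1 / (1 - q)) := by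
    refine sum_le_of_eventually_geometric hΔ₁0 hq0 hq1 hD0 (fun i => ?_) (fun i hi => ?_) t
    · have := hDscale i 1 zero_le_one le_rfl (by have := hanti i; linarith)
      linarith
    · refine hDscale i (q ^ i) (by positivity) (pow_le_one₀ hq0 hq1.le) ?_
      rw [← pow_mul, mul_comm i 2, pow_mul, hqsq]
      exact phase1 i hi
  have hgeo : 1 / (1 - q) ≤ 3 * (1 + D 0) ^ 2 / (α * (1 - β)) := by
    have e : 3 * (1 + D 0) ^ 2 / (α * (1 - β)) = 2 / ρ₁ := by
      rw [hρ₁]; field_simp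
    rw [e, div_le_div_iff₀ (by linarith) hρ₁0]
    nlinarith
  have hsumD' : ∑ i ∈ Finset.range t, D i ≤
      D 0 * (Δ₁ + 3 * (1 + D 0) ^ 2 / (α * (1 - β))) := hsumD.trans (by gcongr)
  have hsumD0 : 0 ≤ ∑ i ∈ Finset.range t, D i := Finset.sum_nonneg fun i _ => (hD i).1
  -- In the metric `H_*` the corrections are controlled by the summable sequence `D`.
  have hΔ₂' : Psi d ((hess xstar)⁻¹ * B 0) = Δ₂ := by
    rw [hΔ₂, hB0eq, Matrix.mul_smul, Matrix.mul_one]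
  have phase2 : f (x t) - f xstar ≤
      (f (x 0) - f xstar) * (1 - 2 * (α * (1 - β)) / 3) ^ t := by
    refine bfgs_rate hα0 hβ hB0pd hη hxupd hBupd hAW1 hAW2 (fun i => hmin _) hgrad0 hHpd
      (δ := D) (θ := fun i => 2 / (1 + D i)) (by positivity) (by linarith) ?_ ?_ ?_ t ?_
    · intro i
      exact gradient_difference_bound hf hgrad hhess hpd hM hssc hmin (hD i).1 (hlev i)
        (by rw [hseg]; exact hdesc i) (by rw [hseg])
    · intro i
      have := (hD i).1
      positivity
    · intro i
      exact grad_dominance hf hgrad hhess hpd hM hssc hmin (hD i).1 (hlev i)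
    · have hterm : ∀ i ∈ Finset.range t,
          D i - Real.log (α * (1 - β) * (2 / (1 + D i)) / (2 * (α * (1 - β)) / 3))
            ≤ 2 * D i - 1 := by
        intro i _
        have hDi := (hD i).1
        have e : α * (1 - β) * (2 / (1 + D i)) / (2 * (α * (1 - β)) / 3) = 3 / (1 + D i) := by
          field_simp
        rw [e, Real.log_div (by norm_num) (by positivity)]
        have := Real.log_le_sub_one_of_pos (by positivity : 0 < 1 + D i)
        linarith
      have hs := Finset.sum_le_sum hterm
      have hr : ∑ i ∈ Finset.range t, (2 * D i - 1) = 2 * ∑ i ∈ Finset.range t, D i - t := by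
        rw [Finset.sum_sub_distrib, ← Finset.mul_sum, Finset.sum_const, Finset.card_range,
          nsmul_eq_mul, mul_one]
      rw [hr] at hs
      rw [hΔ₂']
      linarith
  rw [div_le_iff₀ (by linarith)]
  have e : 1 - 2 * α * (1 - β) / 3 = 1 - 2 * (α * (1 - β)) / 3 := by ring
  rw [e, mul_comm]
  exact phase2
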